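/- Let {S_n}_{n≥0} be a positive real sequence satisfying S_n = a(n)S_{n−1} + b(n)S_{n−2} for n ≥ 2, where a, b are real-valued functions, and let N be a nonnegative integer with a(n) > 0 and b(n) < 0 for all n ≥ N. Suppose there exist real-valued functions u and v such that for all n ≥ N + 2: (i) a(n)/2 ≤ u(n) ≤ S_n/S_{n−1} ≤ v(n); (ii) 4u(n)^3 − 3a(n)u(n)^2 − a(n+1)b(n) ≥ 0; (iii) v(n)^4 − a(n)v(n)^3 − a(n+1)b(n)v(n) − b(n)b(n+1) ≤ 0. Then for all n ≥ N + 2, (S_n/S_{n−1})^2 ≥ (S_{n−1}/S_{n−2})(S_{n+1}/S_n); that is, {S_n}_{n≥N} is ratio log-concave. -/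

import Mathlib

/-!
Write `r = S n / S (n - 1)`. The recurrence gives `S (n - 1) / S (n - 2) = -b n / (a n - r)`, with
`0 < a n - r`, and `S (n + 1) / S n = a (n + 1) + b (n + 1) / r`, so the claim is equivalent to
`f r ≤ 0` for the quartic `f x = x ^ 4 - a n * x ^ 3 - a (n + 1) * b n * x - b n * b (n + 1)`.
Since `f'' x = 6 * x * (2 * x - a n)`, the quartic is convex on `[a n / 2, ∞)`; together with
`f' (u n) ≥ 0` this makes `f` increasing on `[u n, ∞)`, so `f r ≤ f (v n) ≤ 0`.
-/

/-- For `0 < a`, a quartic `x ^ 4 - a * x ^ 3 - c * x - d` whose derivative is nonnegative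
at some `u ≥ a / 2` is monotone to the right of `u`. -/
lemma quartic_le_of_deriv_nonneg {a c d u r v : ℝ} (ha : 0 < a) (hu : a / 2 ≤ u) (hur : u ≤ r)
    (hrv : r ≤ v) (hd : 0 ≤ 4 * u ^ 3 - 3 * a * u ^ 2 - c) :
    r ^ 4 - a * r ^ 3 - c * r - d ≤ v ^ 4 - a * v ^ 3 - c * v - d := by
  have h0 : 0 < u := by linarith
  -- The derivative increases from `u` to `r`.
  have hd' : 0 ≤ 4 * r ^ 3 - 3 * a * r ^ 2 - c := by
    have h1 : 0 ≤ (r - u) * ((2 * u - a) * (3 * (r + u)) + 2 * (r - u) * (2 * r + u)) := by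
      have : 0 ≤ r - u := by linarith
      have : 0 ≤ 2 * u - a := by linarith
      have : 0 < r := by linarith
      positivity
    linarith
  -- The graph lies above its tangent line at `r`.
  have h2 : 0 ≤ (v - r) ^ 2 * ((2 * r - a) * (v + 2 * r) + (v - r) * (v + r)) := by
    have : 0 ≤ v - r := by linarith
    have : 0 ≤ 2 * r - a := by linarith
    have : 0 < r := by linarith
    have : 0 < v := by linarith
    positivity
  have h3 : 0 ≤ (4 * r ^ 3 - 3 * a * r ^ 2 - c) * (v - r) :=
    mul_nonneg hd' (by linarith)
  linarith


/-- A criterion for the ratio log-concavity of a positive sequence satisfying a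
three-term recurrence `S_n = a(n) S_{n-1} + b(n) S_{n-2}`. -/
theorem stmt_10 (S a b : ℕ → ℝ) (hpos : ∀ n, 0 < S n)
    (hrec : ∀ n : ℕ, 2 ≤ n → S n = a n * S (n - 1) + b n * S (n - 2))
    (N : ℕ)
    (ha : ∀ n : ℕ, N ≤ n → 0 < a n)
    (hb : ∀ n : ℕ, N ≤ n → b n < 0)
    (u v : ℕ → ℝ)
    (hi : ∀ n : ℕ, N + 2 ≤ n →
      a n / 2 ≤ u n ∧ u n ≤ S n / S (n - 1) ∧ S n / S (n - 1) ≤ v n)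
    (hii : ∀ n : ℕ, N + 2 ≤ n →
      0 ≤ 4 * u n ^ 3 - 3 * a n * u n ^ 2 - a (n + 1) * b n)
    (hiii : ∀ n : ℕ, N + 2 ≤ n →
      v n ^ 4 - a n * v n ^ 3 - a (n + 1) * b n * v n - b n * b (n + 1) ≤ 0) :
    ∀ n : ℕ, N + 2 ≤ n →
      (S (n - 1) / S (n - 2)) * (S (n + 1) / S n) ≤ (S n / S (n - 1)) ^ 2 := by
  intro n hn
  obtain ⟨hu, hur, hrv⟩ := hi n hn
  have hf := (quartic_le_of_deriv_nonneg (d := b n * b (n + 1)) (ha n (by omega)) hu hur hrv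
    (hii n hn)).trans (hiii n hn)
  have h1 := hrec n (by omega)
  have h2 := hrec (n + 1) (by omega)
  rw [show n + 1 - 1 = n by omega, show n + 1 - 2 = n - 1 by omega] at h2
  have hbn := hb n (by omega)
  have hp := hpos (n - 2)
  have hq := hpos (n - 1)
  have hs := hpos n
  have hqr : S n = S n / S (n - 1) * S (n - 1) := by field_simp
  have hsr : S (n + 1) / S n = a (n + 1) + b (n + 1) / (S n / S (n - 1)) := by
    rw [h2]; field_simp
  have hr : 0 < S n / S (n - 1) := by positivity
  have hp1 : 0 < S (n - 1) / S (n - 2) := by positivity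
  have hpr : (a n - S n / S (n - 1)) * (S (n - 1) / S (n - 2)) = -b n := by
    field_simp
    linarith
  rw [hsr]
  generalize S n / S (n - 1) = r at *
  generalize S (n - 1) / S (n - 2) = p at *
  have har : 0 < a n - r := pos_of_mul_pos_left (by linarith) hp1.le
  refine le_of_mul_le_mul_left ?_ (mul_pos har hr)
  calc (a n - r) * r * (p * (a (n + 1) + b (n + 1) / r))
      = ((a n - r) * p) * (a (n + 1) * r + b (n + 1)) := by field_simp
    _ = -b n * (a (n + 1) * r + b (n + 1)) := by rw [hpr]
    _ ≤ (a n - r) * r * r ^ 2 := by linarith
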